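/- Let n ≥ 1 and k ≥ 2, and let B ∈ ℝ^{n×n} be the Dirichlet second-difference matrix, i.e., B_{ii} = 2, B_{i,i±1} = −1, and B_{ij} = 0 otherwise. Then ‖B^{−k}‖_∞ ≤ ((n+1)²/8)^k, where ‖·‖_∞ denotes the operator norm induced by the maximum norm (the maximum absolute row sum). -/

import Mathlib

/-!
The inverse of `B` is the discrete Green's function `G`, which is entrywise nonnegative
(`dirichletB_inv`, `dirichletG_nonneg`). Since `B v = 1` for the parabola
`v i = (i + 1) (n - i) / 2`, the row sums of `G` are `G 1 = G B v = v ≤ (n + 1)² / 8`.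
A nonnegative matrix with row sums at most `c` has `k`-th power nonnegative with row sums at
most `c ^ k`. The identities `B G = 1` and `B v = 1` are both read off from
`dirichletB_mulVec`: `B` acts as the negative second difference on sequences vanishing at the
boundary points `0` and `n + 1`.
-/

open Real Finset

/-- The `n × n` Dirichlet second-difference matrix: `2` on the diagonal, `-1` on the
sub- and superdiagonals, `0` elsewhere. -/
def dirichletB (n : ℕ) : Matrix (Fin n) (Fin n) ℝ :=
  fun i j => if i = j then 2 else if |(i : ℤ) - (j : ℤ)| = 1 then -1 else 0

/-- The discrete Green's function. In terms of the grid points `x = i + 1` and `y = j + 1` of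
`{1, …, n}` it is `min x y * (n + 1 - max x y) / (n + 1)`. -/
noncomputable def dirichletG (n : ℕ) : Matrix (Fin n) (Fin n) ℝ :=
  fun i j => min ((i : ℝ) + 1) ((j : ℝ) + 1) *
    ((n : ℝ) + 1 - max ((i : ℝ) + 1) ((j : ℝ) + 1)) / ((n : ℝ) + 1)

/-- `B` is the negative second difference on grid functions `f` on `{0, …, n + 1}` with zero
boundary values; matrix index `l` corresponds to the grid point `l + 1`. -/
lemma dirichletB_mulVec (n : ℕ) (f : ℕ → ℝ) (h0 : f 0 = 0) (h1 : f (n + 1) = 0) (i : Fin n) :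
    ∑ l : Fin n, dirichletB n i l * f (l + 1) = 2 * f (i + 1) - f i - f (i + 2) := by
  have hterm : ∀ l : Fin n, dirichletB n i l * f (l + 1) =
      (if (l : ℕ) = i then 2 * f (i + 1) else 0) - (if (l : ℕ) + 1 = i then f i else 0)
        - (if (l : ℕ) = i + 1 then f (i + 2) else 0) := by
    intro l
    unfold dirichletB
    rcases lt_trichotomy (l : ℕ) i with h | h | h
    · have : i ≠ l := by rintro rfl; omega
      by_cases h' : (l : ℕ) + 1 = i
      · have e : |((i : ℕ) : ℤ) - ((l : ℕ) : ℤ)| = 1 := by rw [abs_eq] <;> omega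
        simp [this, e, h', h.ne, show (l : ℕ) ≠ i + 1 by omega]
      · have e : ¬ |((i : ℕ) : ℤ) - ((l : ℕ) : ℤ)| = 1 := by rw [abs_eq] <;> omega
        simp [this, e, h', h.ne, show (l : ℕ) ≠ i + 1 by omega]
    · have : i = l := Fin.ext h.symm
      subst this
      simp
    · have : i ≠ l := by rintro rfl; omega
      by_cases h' : (l : ℕ) = i + 1
      · have e : |((i : ℕ) : ℤ) - ((l : ℕ) : ℤ)| = 1 := by rw [abs_eq] <;> omega
        simp [this, h', show (i : ℕ) + 1 + 1 ≠ i by omega]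
      · have e : ¬ |((i : ℕ) : ℤ) - ((l : ℕ) : ℤ)| = 1 := by rw [abs_eq] <;> omega
        simp [this, e, h', h.ne', show (l : ℕ) + 1 ≠ i by omega]
  have hi := i.isLt
  have s1 : ∑ l : Fin n, (if (l : ℕ) = i then 2 * f (i + 1) else 0) = 2 * f (i + 1) := by
    rw [Finset.sum_eq_single i] <;> simp [Fin.ext_iff]
    intros; omega
  -- For `i = 0` there is no left neighbour, and the missing term is the boundary value `f 0`.
  have s2 : ∑ l : Fin n, (if (l : ℕ) + 1 = i then f i else 0) = f i := by
    by_cases hz : (i : ℕ) = 0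
    · simp [hz, h0]
    · rw [Finset.sum_eq_single (⟨i - 1, by omega⟩ : Fin n)]
      · rw [if_pos]; simp only; omega
      · intro b _ hb
        rw [if_neg]
        intro h
        exact hb (Fin.ext (by simp only; omega))
      · simp
  -- For `i = n - 1` there is no right neighbour; the missing term is `f (n + 1)`.
  have s3 : ∑ l : Fin n, (if (l : ℕ) = i + 1 then f (i + 2) else 0) = f (i + 2) := by
    by_cases hz : (i : ℕ) + 1 = n
    · have : f (i + 2) = 0 := by rw [show (i : ℕ) + 2 = n + 1 by omega, h1]
      simp [this]
    · rw [Finset.sum_eq_single (⟨i + 1, by omega⟩ : Fin n)]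
      · simp
      · intro b _ hb
        rw [if_neg]
        intro h
        exact hb (Fin.ext h)
      · simp
  rw [Finset.sum_congr rfl fun l _ => hterm l, Finset.sum_sub_distrib, Finset.sum_sub_distrib,
    s1, s2, s3]

lemma dirichletB_mul_dirichletG (n : ℕ) : dirichletB n * dirichletG n = 1 := by
  ext i j
  have hn : (0 : ℝ) < (n : ℝ) + 1 := by positivity
  have hj : (j : ℝ) + 1 ≤ n := by exact_mod_cast j.isLt
  have hj0 : (0 : ℝ) ≤ (j : ℝ) := by positivity
  have key := dirichletB_mulVec n (fun x => min (x : ℝ) ((j : ℝ) + 1) *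
    ((n : ℝ) + 1 - max (x : ℝ) ((j : ℝ) + 1)) / ((n : ℝ) + 1))
    (by rw [Nat.cast_zero, min_eq_left (by linarith)]; simp)
    (by push_cast; rw [max_eq_left (by linarith)]; simp) i
  rw [Matrix.mul_apply]
  simp only [dirichletG]
  push_cast at key
  rw [key, Matrix.one_apply]
  rcases lt_trichotomy (i : ℕ) j with h | h | h
  · have h' : (i : ℝ) + 1 ≤ j := by exact_mod_cast h
    rw [if_neg (by rintro rfl; omega), min_eq_left (by linarith), min_eq_left (by linarith),
      min_eq_left (by linarith), max_eq_right (by linarith), max_eq_right (by linarith),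
      max_eq_right (by linarith)]
    field_simp
    ring
  · have : i = j := Fin.ext h
    subst this
    rw [if_pos rfl, min_self, max_self, min_eq_left (by linarith), max_eq_right (by linarith),
      min_eq_right (by linarith), max_eq_left (by linarith)]
    field_simp
    ring
  · have h' : (j : ℝ) + 1 ≤ i := by exact_mod_cast h
    rw [if_neg (by rintro rfl; omega), min_eq_right (by linarith), min_eq_right (by linarith),
      min_eq_right (by linarith), max_eq_left (by linarith), max_eq_left (by linarith),
      max_eq_left (by linarith)]
    field_simp
    ring

lemma dirichletB_inv (n : ℕ) : (dirichletB n)⁻¹ = dirichletG n :=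
  Matrix.inv_eq_right_inv (dirichletB_mul_dirichletG n)

lemma dirichletG_nonneg (n : ℕ) (i j : Fin n) : 0 ≤ dirichletG n i j := by
  have hi : (i : ℝ) + 1 ≤ n := by exact_mod_cast i.isLt
  have hj : (j : ℝ) + 1 ≤ n := by exact_mod_cast j.isLt
  have hmax : max ((i : ℝ) + 1) ((j : ℝ) + 1) ≤ n := max_le hi hj
  have : (0 : ℝ) ≤ (n : ℝ) + 1 - max ((i : ℝ) + 1) ((j : ℝ) + 1) := by linarith
  unfold dirichletG
  positivity

/-- The row sums of `G` are the values of the parabola solving `B v = 1`. -/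
lemma dirichletG_row_sum (n : ℕ) (i : Fin n) :
    ∑ j, dirichletG n i j = ((i : ℝ) + 1) * ((n : ℝ) - i) / 2 := by
  let v : Fin n → ℝ := fun i => ((i : ℝ) + 1) * ((n : ℝ) - i) / 2
  have hv : (dirichletB n).mulVec v = 1 := by
    ext i
    have key := dirichletB_mulVec n (fun x => (x : ℝ) * ((n : ℝ) + 1 - x) / 2)
      (by simp) (by simp) i
    have e : (dirichletB n).mulVec v i = ∑ l : Fin n, dirichletB n i l *
        ((fun x : ℕ => (x : ℝ) * ((n : ℝ) + 1 - x) / 2) (l + 1)) := by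
      simp only [Matrix.mulVec, dotProduct, v]
      refine Finset.sum_congr rfl fun l _ => ?_
      push_cast
      ring
    rw [e, key]
    push_cast
    simp only [Pi.one_apply]
    ring
  have hGB : dirichletG n * dirichletB n = 1 :=
    mul_eq_one_comm.mp (dirichletB_mul_dirichletG n)
  have h : (dirichletG n).mulVec 1 = v := by
    rw [← hv, Matrix.mulVec_mulVec, hGB, Matrix.one_mulVec]
  simpa [Matrix.mulVec, dotProduct, v] using congrFun h i

/-- `(i + 1) + (n - i) = n + 1`, so the bound is the inequality of arithmetic and geometric
means. -/
lemma dirichletG_row_sum_le (n : ℕ) (i : Fin n) :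
    ∑ j, dirichletG n i j ≤ ((n : ℝ) + 1) ^ 2 / 8 := by
  rw [dirichletG_row_sum]
  nlinarith [sq_nonneg (((i : ℝ) + 1) - ((n : ℝ) - i))]

lemma pow_nonneg_row_sum_le {n : ℕ} (A : Matrix (Fin n) (Fin n) ℝ) (c : ℝ)
    (hc : 0 ≤ c) (hA : ∀ i j, 0 ≤ A i j) (hs : ∀ i, ∑ j, A i j ≤ c) (k : ℕ) :
    (∀ i j, 0 ≤ (A ^ k) i j) ∧ ∀ i, ∑ j, (A ^ k) i j ≤ c ^ k := by
  induction k with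
  | zero =>
    refine ⟨fun i j => ?_, fun i => ?_⟩
    · rw [pow_zero, Matrix.one_apply]; split_ifs <;> norm_num
    · simp [Matrix.one_apply]
  | succ k ih =>
    refine ⟨fun i j => ?_, fun i => ?_⟩
    · rw [pow_succ', Matrix.mul_apply]
      exact Finset.sum_nonneg fun l _ => mul_nonneg (hA i l) (ih.1 l j)
    · simp only [pow_succ', Matrix.mul_apply]
      rw [Finset.sum_comm]
      calc ∑ l, ∑ j, A i l * (A ^ k) l j = ∑ l, A i l * ∑ j, (A ^ k) l j := by
            simp only [Finset.mul_sum]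
        _ ≤ ∑ l, A i l * c ^ k :=
            Finset.sum_le_sum fun l _ => mul_le_mul_of_nonneg_left (ih.2 l) (hA i l)
        _ = (∑ l, A i l) * c ^ k := by rw [Finset.sum_mul]
        _ ≤ c * c ^ k := mul_le_mul_of_nonneg_right (hs i) (pow_nonneg hc k)

/-- For `k ≥ 2`, the Dirichlet second-difference matrix `B` satisfies
`‖B^{-k}‖_∞ ≤ ((n+1)²/8)^k`, where `‖·‖_∞` is the maximum absolute row sum. -/
theorem stmt9 (n k : ℕ) (hn : 1 ≤ n) (hk : 2 ≤ k) :
    ∀ i : Fin n, ∑ j : Fin n, |((dirichletB n)⁻¹ ^ k) i j| ≤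
      (((n : ℝ) + 1) ^ 2 / 8) ^ k := by
  intro i
  obtain ⟨h1, h2⟩ := pow_nonneg_row_sum_le (dirichletG n) (((n : ℝ) + 1) ^ 2 / 8)
    (by positivity) (dirichletG_nonneg n) (dirichletG_row_sum_le n) k
  rw [dirichletB_inv, Finset.sum_congr rfl fun j _ => abs_of_nonneg (h1 i j)]
  exact h2 i
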